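/- For every g ∈ G_o the limits τ̄(g) = lim_{n→∞} τ_λ(gⁿ)/n and σ̄(g) = lim_{n→∞} σ(gⁿ)/n exist, and the map g ↦ τ̄(g) − π·σ̄(g) is a surjective group homomorphism G_o → ℝ; i.e., (τ̄ − πσ̄)(g∘h) = (τ̄ − πσ̄)(g) + (τ̄ − πσ̄)(h) for all g, h ∈ G_o, and every real number is attained. -/

import Mathlib

open MeasureTheory Filter Topology Set Function Real

noncomputable section

/-- The closed unit disk in `ℝ²`. -/
def disk : Set (ℝ × ℝ) := {p | p.1 ^ 2 + p.2 ^ 2 ≤ 1}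

/-- The boundary circle of the unit disk. -/
def bdry : Set (ℝ × ℝ) := {p | p.1 ^ 2 + p.2 ^ 2 = 1}

/-- Partial derivative in the `x`-direction. -/
def pdx (f : ℝ × ℝ → ℝ) (p : ℝ × ℝ) : ℝ := fderiv ℝ f p (1, 0)

/-- Partial derivative in the `y`-direction. -/
def pdy (f : ℝ × ℝ → ℝ) (p : ℝ × ℝ) : ℝ := fderiv ℝ f p (0, 1)

/-- The Jacobian determinant of a map `ℝ² → ℝ²`. -/
def jacDet (g : ℝ × ℝ → ℝ × ℝ) (p : ℝ × ℝ) : ℝ :=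
  pdx (fun q => (g q).1) p * pdy (fun q => (g q).2) p -
    pdy (fun q => (g q).1) p * pdx (fun q => (g q).2) p

/-- `g` represents an element of `Symp(D)`: a `C^∞` diffeomorphism of the closed
unit disk onto itself (smooth up to the boundary, i.e. the restriction of a
globally smooth map with globally smooth inverse on the disk) whose Jacobian
determinant is identically `1` on the disk. -/
def IsSymp (g : ℝ × ℝ → ℝ × ℝ) : Prop :=
  ContDiff ℝ (⊤ : ℕ∞) g ∧ MapsTo g disk disk ∧ (∀ p ∈ disk, jacDet g p = 1) ∧
    ∃ g' : ℝ × ℝ → ℝ × ℝ, ContDiff ℝ (⊤ : ℕ∞) g' ∧ MapsTo g' disk disk ∧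
      (∀ p ∈ disk, g' (g p) = p) ∧ (∀ p ∈ disk, g (g' p) = p)

/-- `g` represents an element of `G_o`: a symplectomorphism of the disk fixing the origin. -/
def IsSympO (g : ℝ × ℝ → ℝ × ℝ) : Prop :=
  IsSymp g ∧ g (0, 0) = (0, 0)

/-- `τ_λ(g) = ∫_D g*λ ∧ λ` for `λ = (x dy - y dx)/2`, written out in coordinates. -/
def tauL (g : ℝ × ℝ → ℝ × ℝ) : ℝ :=
  (1 / 4) * ∫ p in disk,
    (p.1 * ((g p).1 * pdx (fun q => (g q).2) p - (g p).2 * pdx (fun q => (g q).1) p) +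
     p.2 * ((g p).1 * pdy (fun q => (g q).2) p - (g p).2 * pdy (fun q => (g q).1) p))

/-- `σ(g) = ∫_γ (g*λ - λ)` along the radial path `γ(t) = (t,0)`, in coordinates. -/
def sigmaQ (g : ℝ × ℝ → ℝ × ℝ) : ℝ :=
  (1 / 2) * ∫ t in (0:ℝ)..1,
    ((g (t, 0)).1 * pdx (fun q => (g q).2) (t, 0) -
      (g (t, 0)).2 * pdx (fun q => (g q).1) (t, 0))

/-- `G` is a smooth isotopy in `Symp(D)` starting at the identity. -/
def IsIsotopy (G : ℝ → ℝ × ℝ → ℝ × ℝ) : Prop :=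
  ContDiff ℝ (⊤ : ℕ∞) (fun q : ℝ × (ℝ × ℝ) => G q.1 q.2) ∧
    (∀ t ∈ Icc (0:ℝ) 1, IsSymp (G t)) ∧ (∀ p ∈ disk, G 0 p = p)

/-- `f` is a family of Hamiltonian functions for the isotopy `G`, i.e.
`i_{X_t} ω = d f_t` where `X_t = (∂g_t/∂t) ∘ g_t⁻¹`; since `g_t` maps the disk
onto itself this is expressed at the points `G t p`, `p ∈ D`. -/
def IsHam (G : ℝ → ℝ × ℝ → ℝ × ℝ) (f : ℝ → ℝ × ℝ → ℝ) : Prop :=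
  ContDiff ℝ (⊤ : ℕ∞) (fun q : ℝ × (ℝ × ℝ) => f q.1 q.2) ∧
    ∀ t ∈ Icc (0:ℝ) 1, ∀ p ∈ disk,
      pdx (f t) (G t p) = -(deriv (fun s => G s p) t).2 ∧
      pdy (f t) (G t p) = (deriv (fun s => G s p) t).1

/-- `φ` is the lift of the boundary isotopy of `G`, with `φ 0 = id`. -/
def IsBoundaryLift (G : ℝ → ℝ × ℝ → ℝ × ℝ) (φ : ℝ → ℝ → ℝ) : Prop :=
  ContDiff ℝ (⊤ : ℕ∞) (fun q : ℝ × ℝ => φ q.1 q.2) ∧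
    (∀ t ∈ Icc (0:ℝ) 1, StrictMono (φ t) ∧ ∀ θ : ℝ, φ t (θ + 2 * π) = φ t θ + 2 * π) ∧
    (∀ θ : ℝ, φ 0 θ = θ) ∧
    (∀ t ∈ Icc (0:ℝ) 1, ∀ θ : ℝ,
      G t (Real.cos θ, Real.sin θ) = (Real.cos (φ t θ), Real.sin (φ t θ)))


def WL : ℝ × ℝ →L[ℝ] ℝ × ℝ →L[ℝ] ℝ :=
  (ContinuousLinearMap.fst ℝ ℝ ℝ).smulRight (ContinuousLinearMap.snd ℝ ℝ ℝ) -
    (ContinuousLinearMap.snd ℝ ℝ ℝ).smulRight (ContinuousLinearMap.fst ℝ ℝ ℝ)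

lemma WL_apply (a b : ℝ × ℝ) : WL a b = a.1 * b.2 - a.2 * b.1 := by
  simp [WL]

def AF (g : ℝ × ℝ → ℝ × ℝ) (p : ℝ × ℝ) : ℝ × ℝ →L[ℝ] ℝ :=
  (1 / 2 : ℝ) • (WL (g p)).comp (fderiv ℝ g p) - (1 / 2 : ℝ) • WL p

lemma AF_apply (g : ℝ × ℝ → ℝ × ℝ) (p w : ℝ × ℝ) :
    AF g p w = (1 / 2) * WL (g p) (fderiv ℝ g p w) - (1 / 2) * WL p w := by
  simp [AF]

lemma fderiv_fst_eq {g : ℝ × ℝ → ℝ × ℝ} {p : ℝ × ℝ} (h : DifferentiableAt ℝ g p) (w : ℝ × ℝ) :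
    fderiv ℝ (fun q => (g q).1) p w = (fderiv ℝ g p w).1 := by
  rw [h.hasFDerivAt.fst.fderiv]; rfl

lemma fderiv_snd_eq {g : ℝ × ℝ → ℝ × ℝ} {p : ℝ × ℝ} (h : DifferentiableAt ℝ g p) (w : ℝ × ℝ) :
    fderiv ℝ (fun q => (g q).2) p w = (fderiv ℝ g p w).2 := by
  rw [h.hasFDerivAt.snd.fderiv]; rfl

lemma jac_eq {g : ℝ × ℝ → ℝ × ℝ} {p : ℝ × ℝ} (h : DifferentiableAt ℝ g p) :
    jacDet g p = WL (fderiv ℝ g p (1, 0)) (fderiv ℝ g p (0, 1)) := by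
  simp only [jacDet, pdx, pdy, fderiv_fst_eq h, fderiv_snd_eq h, WL_apply]
  ring

lemma lin_decomp (L : ℝ × ℝ →L[ℝ] ℝ × ℝ) (x : ℝ × ℝ) :
    L x = x.1 • L (1, 0) + x.2 • L (0, 1) := by
  rw [← map_smul, ← map_smul, ← map_add]; simp

lemma W_lin (L : ℝ × ℝ →L[ℝ] ℝ × ℝ) (x y : ℝ × ℝ) :
    WL (L x) (L y) = WL (L (1, 0)) (L (0, 1)) * WL x y := by
  rw [lin_decomp L x, lin_decomp L y]
  simp only [WL_apply, Prod.fst_add, Prod.snd_add, Prod.smul_fst, Prod.smul_snd, smul_eq_mul]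
  ring

lemma W_fderiv {g : ℝ × ℝ → ℝ × ℝ} {p : ℝ × ℝ} (h : DifferentiableAt ℝ g p) (x y : ℝ × ℝ) :
    WL (fderiv ℝ g p x) (fderiv ℝ g p y) = jacDet g p * WL x y := by
  rw [W_lin, jac_eq h]

lemma IsSymp.diff {g : ℝ × ℝ → ℝ × ℝ} (h : IsSymp g) : Differentiable ℝ g :=
  h.1.differentiable (by simp)

lemma disk_convex : Convex ℝ disk := by
  intro p hp q hq a b ha hb hab
  simp only [disk, mem_ofPred_eq, Prod.fst_add, Prod.snd_add, Prod.smul_fst, Prod.smul_snd,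
    smul_eq_mul] at *
  have hb' : b = 1 - a := by linarith
  subst hb'
  have : (a * p.1 + (1 - a) * q.1) ^ 2 + (a * p.2 + (1 - a) * q.2) ^ 2
    = a * (p.1 ^ 2 + p.2 ^ 2) + (1 - a) * (q.1 ^ 2 + q.2 ^ 2)
      - a * (1 - a) * ((p.1 - q.1) ^ 2 + (p.2 - q.2) ^ 2) := by ring
  rw [this]
  have h3 : 0 ≤ a * (1 - a) * ((p.1 - q.1) ^ 2 + (p.2 - q.2) ^ 2) := by positivity
  nlinarith

lemma disk_closed : IsClosed disk :=
  isClosed_le (by fun_prop) (by fun_prop)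

lemma disk_compact : IsCompact disk := by
  refine (isCompact_Icc.prod isCompact_Icc : IsCompact (Icc (-1:ℝ) 1 ×ˢ Icc (-1:ℝ) 1)).of_isClosed_subset
    disk_closed ?_
  rintro ⟨x, y⟩ h
  simp only [disk, mem_ofPred_eq] at h
  simp only [mem_prod, mem_Icc]
  refine ⟨⟨?_, ?_⟩, ?_, ?_⟩ <;> nlinarith [sq_nonneg x, sq_nonneg y]

lemma disk_int {p : ℝ × ℝ} (h : p.1 ^ 2 + p.2 ^ 2 < 1) : disk ∈ 𝓝 p := by
  have : IsOpen {p : ℝ × ℝ | p.1 ^ 2 + p.2 ^ 2 < 1} := isOpen_lt (by fun_prop) (by fun_prop)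
  filter_upwards [this.mem_nhds h] with q hq
  exact le_of_lt hq

lemma zero_mem_disk : ((0, 0) : ℝ × ℝ) ∈ disk := by simp [disk]

lemma disk_uniqueDiff : UniqueDiffOn ℝ disk := by
  refine uniqueDiffOn_convex disk_convex ⟨(0,0), ?_⟩
  exact mem_interior_iff_mem_nhds.2 (disk_int (by simp))

def IsK (g : ℝ × ℝ → ℝ × ℝ) (K : ℝ × ℝ → ℝ) : Prop :=
  K (0, 0) = 0 ∧ ∀ p ∈ disk, HasFDerivWithinAt K (AF g p) disk p

lemma exists_K {g : ℝ × ℝ → ℝ × ℝ} (h : IsSymp g) : ∃ K, IsK g K := by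
  have h2 : ContDiff ℝ 2 g := contDiff_infty.1 h.1 2
  have hd1 : Differentiable ℝ (fderiv ℝ g) :=
    (h2.fderiv_right (m := 1) (by norm_num)).differentiable (by simp)
  have key := disk_convex.exists_forall_hasFDerivWithinAt_of_hasFDerivWithinAt_symmetric
    (ω := AF g) (dω := fun p => (1 / 2 : ℝ) • _ - (1 / 2 : ℝ) • WL)
    (fun p hp => by
      have h1 := (WL.hasFDerivAt (x := g p)).comp p (h.diff p).hasFDerivAt
      have h2 := (hd1 p).hasFDerivAt
      have h3 := h1.clm_comp h2
      have h4 := (h3.const_smul (1/2 : ℝ)).sub ((WL.hasFDerivAt (x := p)).const_smul (1/2 : ℝ))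
      exact h4.hasFDerivWithinAt) ?_
  · obtain ⟨f, hf⟩ := key
    refine ⟨fun p => f p - f (0,0), by simp, fun p hp => (hf p hp).sub_const _⟩
  · intro a ha x _ y _
    have hs : IsSymmSndFDerivAt ℝ g a :=
      (h2.contDiffAt).isSymmSndFDerivAt (by simp [minSmoothness_of_isRCLikeNormedField])
    have hxy : fderiv ℝ (fderiv ℝ g) a x y = fderiv ℝ (fderiv ℝ g) a y x := hs x y
    have hj := W_fderiv (h.diff a) x y
    have hj2 := W_fderiv (h.diff a) y x
    rw [h.2.2.1 a ha] at hj hj2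
    simp
    simp only [hxy, hj, hj2, WL_apply]
    ring


lemma jac_comp {g h : ℝ × ℝ → ℝ × ℝ} (hg : Differentiable ℝ g) (hh : Differentiable ℝ h)
    (p : ℝ × ℝ) : jacDet (g ∘ h) p = jacDet g (h p) * jacDet h p := by
  rw [jac_eq ((hg (h p)).comp p (hh p)), fderiv_comp p (hg (h p)) (hh p)]
  simp only [ContinuousLinearMap.comp_apply]
  rw [W_fderiv (hg (h p)), ← jac_eq (hh p)]

lemma IsSymp.comp {g h : ℝ × ℝ → ℝ × ℝ} (hg : IsSymp g) (hh : IsSymp h) : IsSymp (g ∘ h) := by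
  have d1 := hg.diff
  have d2 := hh.diff
  obtain ⟨a1, a2, a3, g', a4, a5, a6, a7⟩ := hg
  obtain ⟨b1, b2, b3, h', b4, b5, b6, b7⟩ := hh
  refine ⟨a1.comp b1, a2.comp b2, fun p hp => ?_, h' ∘ g', b4.comp a4, b5.comp a5, fun p hp => ?_,
    fun p hp => ?_⟩
  · rw [jac_comp d1 d2, a3 _ (b2 hp), b3 _ hp, one_mul]
  · simp only [comp_apply]; rw [a6 _ (b2 hp), b6 _ hp]
  · simp only [comp_apply]; rw [b7 _ (a5 hp), a7 _ hp]

lemma IsSympO.comp {g h : ℝ × ℝ → ℝ × ℝ} (hg : IsSympO g) (hh : IsSympO h) : IsSympO (g ∘ h) :=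
  ⟨hg.1.comp hh.1, by simp [hh.2, hg.2]⟩

lemma isSympO_id : IsSympO id := by
  refine ⟨⟨contDiff_id, fun p hp => hp, fun p hp => ?_, id, contDiff_id, fun p hp => hp,
    fun p hp => rfl, fun p hp => rfl⟩, rfl⟩
  rw [jac_eq differentiableAt_id]; simp [WL_apply]

lemma IsSympO.iter {g : ℝ × ℝ → ℝ × ℝ} (hg : IsSympO g) (n : ℕ) : IsSympO g^[n] := by
  induction n with
  | zero => exact isSympO_id
  | succ n ih => rw [Function.iterate_succ]; exact ih.comp hg

lemma K_comp {g h : ℝ × ℝ → ℝ × ℝ} (hg : IsSympO g) (hh : IsSympO h) {K L M : ℝ × ℝ → ℝ}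
    (hK : IsK g K) (hL : IsK h L) (hM : IsK (g ∘ h) M) {p : ℝ × ℝ} (hp : p ∈ disk) :
    M p = L p + K (h p) := by
  have hD : ∀ q ∈ disk, HasFDerivWithinAt (fun q => L q + K (h q)) (AF (g ∘ h) q) disk q := by
    intro q hq
    have h1 := (hK.2 (h q) (hh.1.2.1 hq)).comp q (hh.1.diff q).hasFDerivAt.hasFDerivWithinAt hh.1.2.1
    have h2 := (hL.2 q hq).add h1
    refine h2.congr_fderiv ?_
    ext1 <;> ext <;> simp [AF_apply, fderiv_comp q (hg.1.diff (h q)) (hh.1.diff q)]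
  refine disk_convex.eqOn_of_fderivWithin_eq (𝕜 := ℝ)
    (fun q hq => (hM.2 q hq).differentiableWithinAt)
    (fun q hq => (hD q hq).differentiableWithinAt) disk_uniqueDiff (fun q hq => ?_) zero_mem_disk ?_ hp
  · rw [(hM.2 q hq).fderivWithin (disk_uniqueDiff q hq), (hD q hq).fderivWithin (disk_uniqueDiff q hq)]
  · rw [hM.1, hL.1, hh.2, hK.1, add_zero]

lemma K_cont {g : ℝ × ℝ → ℝ × ℝ} {K : ℝ × ℝ → ℝ} (hK : IsK g K) : ContinuousOn K disk :=
  fun p hp => (hK.2 p hp).continuousWithinAt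

lemma bdry_map {g : ℝ × ℝ → ℝ × ℝ} (hg : IsSymp g) {p : ℝ × ℝ} (hp : p.1 ^ 2 + p.2 ^ 2 = 1) :
    (g p).1 ^ 2 + (g p).2 ^ 2 = 1 := by
  have hpd : p ∈ disk := le_of_eq hp
  have d1 := hg.diff
  obtain ⟨a1, a2, a3, g', a4, a5, a6, a7⟩ := hg
  have d2 : Differentiable ℝ g' := a4.differentiable (by simp)
  by_contra hne
  have hlt : (g p).1 ^ 2 + (g p).2 ^ 2 < 1 := lt_of_le_of_ne (a2 hpd) hne
  have hN := disk_int hlt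
  have e1 : g' (g p) = p := a6 p hpd
  have hmax : IsLocalMax (fun q => (g' q).1 ^ 2 + (g' q).2 ^ 2) (g p) := by
    filter_upwards [hN] with q hq
    rw [e1, hp]; exact a5 hq
  have hder := ((d2 (g p)).hasFDerivAt.fst.pow 2).add ((d2 (g p)).hasFDerivAt.snd.pow 2)
  have h0 := hmax.hasFDerivAt_eq_zero hder
  have hc : HasFDerivAt (g ∘ g') ((fderiv ℝ g p).comp (fderiv ℝ g' (g p))) (g p) := by
    have := (d1 (g' (g p))).hasFDerivAt.comp (g p) (d2 (g p)).hasFDerivAt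
    rwa [e1] at this
  have hid : HasFDerivAt (g ∘ g') (ContinuousLinearMap.id ℝ (ℝ × ℝ)) (g p) := by
    refine (hasFDerivAt_id (g p)).congr_of_eventuallyEq ?_
    filter_upwards [hN] with q hq using a7 q hq
  have hu := hc.unique hid
  -- injective, hence surjective
  have hinj : Function.Injective (fderiv ℝ g' (g p)) := by
    intro x y hxy
    have hx := DFunLike.congr_fun hu x
    have hy := DFunLike.congr_fun hu y
    simp only [ContinuousLinearMap.comp_apply, ContinuousLinearMap.id_apply] at hx hy
    rw [← hx, ← hy, hxy]
  have hsurj : Function.Surjective (fderiv ℝ g' (g p)) :=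
    LinearMap.injective_iff_surjective (f := (fderiv ℝ g' (g p)).toLinearMap).1 hinj
  obtain ⟨w, hw⟩ := hsurj p
  have := DFunLike.congr_fun h0 w
  simp [e1, hw] at this
  nlinarith

lemma deriv_nsq {c : ℝ → ℝ × ℝ} {c' : ℝ × ℝ} {t : ℝ} (h : HasDerivAt c c' t) :
    HasDerivAt (fun t => (c t).1 ^ 2 + (c t).2 ^ 2) (2 * ((c t).1 * c'.1 + (c t).2 * c'.2)) t := by
  have h1 : HasDerivAt (fun t => (c t).1) c'.1 t := (ContinuousLinearMap.fst ℝ ℝ ℝ).hasFDerivAt.comp_hasDerivAt t h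
  have h2 : HasDerivAt (fun t => (c t).2) c'.2 t := (ContinuousLinearMap.snd ℝ ℝ ℝ).hasFDerivAt.comp_hasDerivAt t h
  refine ((h1.pow 2).add (h2.pow 2)).congr_deriv ?_
  simp; ring

lemma polar_nsq (r θ : ℝ) : (r * cos θ) ^ 2 + (r * sin θ) ^ 2 = r ^ 2 := by
  have := sin_sq_add_cos_sq θ
  linear_combination r ^ 2 * this

lemma polar_mem {r : ℝ} (h0 : 0 ≤ r) (h1 : r ≤ 1) (θ : ℝ) : (r * cos θ, r * sin θ) ∈ disk := by
  simp only [disk, mem_ofPred_eq, polar_nsq]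
  nlinarith

lemma bdry_speed {g : ℝ × ℝ → ℝ × ℝ} (hg : IsSymp g) (θ : ℝ) :
    0 ≤ WL (g (cos θ, sin θ)) (fderiv ℝ g (cos θ, sin θ) (-sin θ, cos θ)) := by
  set p : ℝ × ℝ := (cos θ, sin θ) with hp
  have hc : ∀ t, HasDerivAt (fun t : ℝ => ((cos t, sin t) : ℝ × ℝ)) (-sin t, cos t) t :=
    fun t => (hasDerivAt_cos t).prodMk (hasDerivAt_sin t)
  have hT := (hg.diff p).hasFDerivAt.comp_hasDerivAt θ (hc θ)
  have hq : (g p).1 ^ 2 + (g p).2 ^ 2 = 1 := bdry_map hg (by simp [hp])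
  -- tangential
  have hT2 := deriv_nsq hT
  have hT0 := hT2.unique ((hasDerivAt_const θ (1:ℝ)).congr_of_eventuallyEq
    (Eventually.of_forall fun t => bdry_map hg (by simp)))
  -- normal
  have hr : HasDerivAt (fun t : ℝ => t • p) p 1 := by
    simpa using (hasDerivAt_id (1:ℝ)).smul_const p
  have hg1 : HasFDerivAt g (fderiv ℝ g p) ((1:ℝ) • p) := by
    rw [one_smul]; exact (hg.diff p).hasFDerivAt
  have hN := hg1.comp_hasDerivAt (1:ℝ) hr
  have hN2 := (deriv_nsq hN).hasDerivWithinAt (s := Iio 1)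
  have hN0 := (hasDerivWithinAt_iff_tendsto_slope' (by simp)).1 hN2
  have hb : 0 ≤ (g p).1 * (fderiv ℝ g p p).1 + (g p).2 * (fderiv ℝ g p p).2 := by
    have : (0:ℝ) ≤ 2 * (((g ∘ fun t : ℝ => t • p) 1).1 * ((fderiv ℝ g p) p).1 +
        ((g ∘ fun t : ℝ => t • p) 1).2 * ((fderiv ℝ g p) p).2) := ge_of_tendsto hN0 ?_
    · simp at this
      linarith
    · have : Ioi (0:ℝ) ∈ 𝓝[Iio 1] (1:ℝ) :=
        mem_nhdsWithin_of_mem_nhds (Ioi_mem_nhds one_pos)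
      filter_upwards [this, self_mem_nhdsWithin] with t ht0 ht
      have ht1 : t < 1 := ht
      have htd : t • p ∈ disk := by
        exact polar_mem (le_of_lt ht0) ht1.le θ
      have := hg.2.1 htd
      simp only [disk, mem_ofPred_eq] at this
      rw [slope_def_field]
      apply div_nonneg_of_nonpos _ (by linarith)
      simp [hq]
      linarith
  have hj := W_fderiv (hg.diff p) p (-sin θ, cos θ)
  rw [hg.2.2.1 p (by simp [disk, hp])] at hj
  have h1 : WL p (-sin θ, cos θ) = 1 := by
    rw [WL_apply, hp]; have := sin_sq_add_cos_sq θ; simp; nlinarith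
  rw [h1] at hj
  simp at hT0
  rw [← hp] at hT0
  simp only [WL_apply] at hj ⊢
  set b := fderiv ℝ g p p
  set a := fderiv ℝ g p (-sin θ, cos θ)
  set q := g p
  have hL : (q.1 * a.2 - q.2 * a.1) * (q.1 * b.1 + q.2 * b.2) = 1 := by
    have hT1 : q.1 * a.1 + q.2 * a.2 = 0 := by linarith
    linear_combination (b.1 * a.2 - b.2 * a.1) * hq + hj + (q.1 * b.2 - q.2 * b.1) * hT1
  by_contra hneg
  push Not at hneg
  nlinarith

lemma K_circle_deriv {g : ℝ × ℝ → ℝ × ℝ} {K : ℝ × ℝ → ℝ} (hK : IsK g K) (θ : ℝ) :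
    HasDerivAt (fun t : ℝ => K (cos t, sin t)) (AF g (cos θ, sin θ) (-sin θ, cos θ)) θ := by
  have hc : HasDerivAt (fun t : ℝ => ((cos t, sin t) : ℝ × ℝ)) (-sin θ, cos θ) θ :=
    (hasDerivAt_cos θ).prodMk (hasDerivAt_sin θ)
  have h1 := (hK.2 (cos θ, sin θ) (by simp [disk])).comp_hasDerivWithinAt (s := univ) θ
    hc.hasDerivWithinAt (fun t _ => by simp [disk])
  exact hasDerivWithinAt_univ.1 h1

lemma K_mono {g : ℝ × ℝ → ℝ × ℝ} (hg : IsSymp g) {K : ℝ × ℝ → ℝ} (hK : IsK g K) :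
    Monotone (fun t : ℝ => K (cos t, sin t) + t / 2) := by
  have hd : ∀ θ, HasDerivAt (fun t : ℝ => K (cos t, sin t) + t / 2)
      (AF g (cos θ, sin θ) (-sin θ, cos θ) + 1 / 2) θ :=
    fun θ => (K_circle_deriv hK θ).add ((hasDerivAt_id θ).div_const 2)
  refine monotone_of_deriv_nonneg (fun θ => (hd θ).differentiableAt) (fun θ => ?_)
  rw [(hd θ).deriv, AF_apply]
  have h1 := bdry_speed hg θ
  have h2 : WL (cos θ, sin θ) (-sin θ, cos θ) = 1 := by
    rw [WL_apply]; have := sin_sq_add_cos_sq θ; simp; nlinarith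
  rw [h2]; linarith

lemma K_osc_aux {g : ℝ × ℝ → ℝ × ℝ} (hg : IsSymp g) {K : ℝ × ℝ → ℝ} (hK : IsK g K) {a b : ℝ}
    (h1 : a ≤ b) (h2 : b ≤ a + 2 * π) : |K (cos b, sin b) - K (cos a, sin a)| ≤ π := by
  have m1 := K_mono hg hK h1
  have m2 := K_mono hg hK h2
  simp only [cos_add_two_pi, sin_add_two_pi] at m1 m2
  rw [abs_le]; constructor <;> linarith

lemma circle_param {p : ℝ × ℝ} (hp : p.1 ^ 2 + p.2 ^ 2 = 1) :
    ∃ θ : ℝ, -π < θ ∧ θ ≤ π ∧ p = (cos θ, sin θ) := by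
  have hn : ‖(⟨p.1, p.2⟩ : ℂ)‖ = 1 := by
    rw [← sq_eq_sq₀ (norm_nonneg _) zero_le_one, ← Complex.normSq_eq_norm_sq, Complex.normSq_mk]
    linarith
  have h0 : (⟨p.1, p.2⟩ : ℂ) ≠ 0 := by intro h; rw [h] at hn; simp at hn
  refine ⟨Complex.arg ⟨p.1, p.2⟩, Complex.neg_pi_lt_arg _, Complex.arg_le_pi _, ?_⟩
  rw [Complex.cos_arg h0, Complex.sin_arg, hn]; simp

lemma K_osc {g : ℝ × ℝ → ℝ × ℝ} (hg : IsSymp g) {K : ℝ × ℝ → ℝ} (hK : IsK g K) {p q : ℝ × ℝ}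
    (hp : p.1 ^ 2 + p.2 ^ 2 = 1) (hq : q.1 ^ 2 + q.2 ^ 2 = 1) : |K p - K q| ≤ π := by
  obtain ⟨a, a1, a2, rfl⟩ := circle_param hp
  obtain ⟨b, b1, b2, rfl⟩ := circle_param hq
  rcases le_total a b with h | h
  · rw [abs_sub_comm]; exact K_osc_aux hg hK h (by linarith)
  · exact K_osc_aux hg hK h (by linarith)

lemma AF_cont {g : ℝ × ℝ → ℝ × ℝ} (hg : IsSymp g) : Continuous (AF g) := by
  have h1 : Continuous (fderiv ℝ g) := hg.1.continuous_fderiv (by simp)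
  have h2 := hg.1.continuous
  unfold AF
  fun_prop

lemma K_radial {g : ℝ × ℝ → ℝ × ℝ} {K : ℝ × ℝ → ℝ} (hK : IsK g K) (θ : ℝ) {r : ℝ}
    (h0 : 0 < r) (h1 : r < 1) :
    HasDerivAt (fun t : ℝ => K (t * cos θ, t * sin θ))
      (AF g (r * cos θ, r * sin θ) (cos θ, sin θ)) r := by
  have hc : HasDerivAt (fun t : ℝ => ((t * cos θ, t * sin θ) : ℝ × ℝ)) (cos θ, sin θ) r :=
    by simpa using ((hasDerivAt_id r).mul_const (cos θ)).prodMk ((hasDerivAt_id r).mul_const (sin θ))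
  have hK' : HasFDerivAt K (AF g (r * cos θ, r * sin θ)) (r * cos θ, r * sin θ) :=
    (hK.2 _ (polar_mem h0.le h1.le θ)).hasFDerivAt (disk_int (by
      simp only [polar_nsq]; nlinarith))
  exact hK'.comp_hasDerivAt r hc

lemma K_radial_cont {g : ℝ × ℝ → ℝ × ℝ} {K : ℝ × ℝ → ℝ} (hK : IsK g K) (θ : ℝ) :
    ContinuousOn (fun t : ℝ => K (t * cos θ, t * sin θ)) (Icc 0 1) :=
  (K_cont hK).comp (by fun_prop) (fun t ht => polar_mem ht.1 ht.2 θ)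

lemma sigma_eq {g : ℝ × ℝ → ℝ × ℝ} (hg : IsSymp g) {K : ℝ × ℝ → ℝ} (hK : IsK g K) :
    sigmaQ g = K (1, 0) := by
  have h := intervalIntegral.integral_eq_sub_of_hasDerivAt_of_le zero_le_one (K_radial_cont hK 0)
    (fun r hr => K_radial hK 0 hr.1 hr.2) (by
      apply Continuous.intervalIntegrable
      have := AF_cont hg
      fun_prop)
  simp [hK.1] at h
  rw [← h, sigmaQ, ← intervalIntegral.integral_const_mul]
  congr 1; ext t
  simp only [pdx, fderiv_fst_eq (hg.diff _), fderiv_snd_eq (hg.diff _), AF_apply, WL_apply]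
  simp

lemma polar_integral {F : ℝ × ℝ → ℝ} (hF : ContinuousOn F disk) :
    ∫ p in disk, F p = ∫ θ in (-π)..π, ∫ r in (0:ℝ)..1, r * F (r * cos θ, r * sin θ) := by
  have hm : MeasurableSet disk := disk_closed.measurableSet
  rw [← integral_indicator hm, ← integral_comp_polarCoord_symm]
  have hI : IntegrableOn (fun p : ℝ × ℝ => p.1 * F (p.1 * cos p.2, p.1 * sin p.2))
      (Icc 0 1 ×ˢ Icc (-π) π) := by
    refine ContinuousOn.integrableOn_compact (isCompact_Icc.prod isCompact_Icc) ?_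
    refine continuousOn_fst.mul (hF.comp (by fun_prop) ?_)
    rintro ⟨r, θ⟩ ⟨h1, h2⟩
    exact polar_mem h1.1 h1.2 θ
  have e1 : ∫ p in polarCoord.target, p.1 • disk.indicator F (polarCoord.symm p)
      = ∫ p in Ioc (0:ℝ) 1 ×ˢ Ioo (-π) π, p.1 * F (p.1 * cos p.2, p.1 * sin p.2) := by
    have ht : polarCoord.target = Ioi (0:ℝ) ×ˢ Ioo (-π) π := rfl
    rw [ht, ← integral_indicator (measurableSet_Ioi.prod measurableSet_Ioo),
      ← integral_indicator (measurableSet_Ioc.prod measurableSet_Ioo)]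
    congr 1; ext ⟨r, θ⟩
    have hs : polarCoord.symm (r, θ) = (r * cos θ, r * sin θ) := rfl
    simp only [indicator, mem_prod, mem_Ioi, mem_Ioo, mem_Ioc, hs, smul_eq_mul]
    have hd : 0 < r → ((r * cos θ, r * sin θ) ∈ disk ↔ r ≤ 1) := by
      intro h
      simp only [disk, mem_ofPred_eq, polar_nsq]
      constructor <;> intro h <;> nlinarith
    by_cases h0 : 0 < r
    · simp only [h0, true_and]
      split_ifs <;> simp_all
    · simp [h0]
  rw [e1, Measure.volume_eq_prod, ← Measure.prod_restrict, integral_prod_symm]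
  · rw [intervalIntegral.integral_of_le (by linarith [pi_pos]), integral_Ioc_eq_integral_Ioo]
    congr 1; ext θ
    rw [intervalIntegral.integral_of_le zero_le_one]
  · rw [Measure.prod_restrict]
    exact hI.mono_set (prod_mono Ioc_subset_Icc_self Ioo_subset_Icc_self)

lemma tau_eq {g : ℝ × ℝ → ℝ × ℝ} (hg : IsSymp g) {K : ℝ × ℝ → ℝ} (hK : IsK g K) :
    tauL g + ∫ p in disk, K p = ∫ θ in (-π)..π, (1 / 2) * K (cos θ, sin θ) := by
  have hA := AF_cont hg
  have c1 : ContinuousOn (fun p : ℝ × ℝ => (1 / 2) * AF g p p) disk :=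
    Continuous.continuousOn (by fun_prop)
  have c2 := K_cont hK
  have ht : tauL g = ∫ p in disk, (1 / 2) * AF g p p := by
    rw [tauL, ← integral_const_mul]
    congr 1; ext p
    simp only [pdx, pdy, fderiv_fst_eq (hg.diff _), fderiv_snd_eq (hg.diff _), AF_apply, WL_apply]
    rw [lin_decomp (fderiv ℝ g p) p]
    simp only [Prod.fst_add, Prod.snd_add, Prod.smul_fst, Prod.smul_snd, smul_eq_mul]
    ring
  rw [ht, ← integral_add (c1.integrableOn_compact disk_compact) (c2.integrableOn_compact disk_compact),
    polar_integral (F := fun p => (1 / 2) * AF g p p + K p) (c1.add c2)]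
  congr 1; ext θ
  have cK := K_radial_cont hK θ
  have h := intervalIntegral.integral_eq_sub_of_hasDerivAt_of_le zero_le_one
    (f := fun r : ℝ => (1 / 2) * r ^ 2 * K (r * cos θ, r * sin θ))
    (f' := fun r => r * ((1 / 2) * AF g (r * cos θ, r * sin θ) (r * cos θ, r * sin θ)
      + K (r * cos θ, r * sin θ)))
    (ContinuousOn.mul (Continuous.continuousOn (by fun_prop)) cK) ?_ ?_
  · rw [h]; simp
  · intro r hr
    have h1 := ((hasDerivAt_pow 2 r).const_mul (1 / 2 : ℝ)).mul (K_radial hK θ hr.1 hr.2)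
    refine h1.congr_deriv ?_
    have : ((r * cos θ, r * sin θ) : ℝ × ℝ) = r • (cos θ, sin θ) := by simp
    have h2 : AF g (r * cos θ, r * sin θ) (r * cos θ, r * sin θ)
      = r * AF g (r * cos θ, r * sin θ) (cos θ, sin θ) := by
      conv_lhs => rw [this, map_smul]
      simp
    rw [h2]; simp; ring
  · apply ContinuousOn.intervalIntegrable
    rw [uIcc_of_le zero_le_one]
    have c3 : Continuous fun r : ℝ =>
        (1 / 2) * AF g (r * cos θ, r * sin θ) (r * cos θ, r * sin θ) := by fun_prop
    exact continuousOn_id.mul (c3.continuousOn.add cK)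

lemma tau_bound {g : ℝ × ℝ → ℝ × ℝ} (hg : IsSymp g) {K : ℝ × ℝ → ℝ} (hK : IsK g K) :
    |tauL g + (∫ p in disk, K p) - π * sigmaQ g| ≤ π * π := by
  rw [tau_eq hg hK, sigma_eq hg hK]
  have hc : Continuous (fun θ : ℝ => K (cos θ, sin θ)) :=
    continuous_iff_continuousAt.2 fun θ => (K_circle_deriv hK θ).continuousAt
  have : π * K (1, 0) = ∫ θ in (-π)..π, (1 / 2) * K (1, 0) := by
    rw [intervalIntegral.integral_const]; simp; ring
  have hc2 : Continuous (fun θ : ℝ => (1 / 2) * K (cos θ, sin θ)) := continuous_const.mul hc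
  rw [this, ← intervalIntegral.integral_sub (hc2.intervalIntegrable _ _) (by simp), ← Real.norm_eq_abs]
  refine (intervalIntegral.norm_integral_le_of_norm_le_const (C := π / 2) ?_).trans ?_
  · intro θ _
    have := K_osc hg hK (p := (cos θ, sin θ)) (q := (1, 0)) (by simp) (by simp)
    rw [← mul_sub, norm_mul, Real.norm_eq_abs, Real.norm_eq_abs]
    norm_num; linarith
  · rw [abs_of_nonneg (by linarith [pi_pos])]; nlinarith [pi_pos]

lemma int_comp {h : ℝ × ℝ → ℝ × ℝ} (hh : IsSymp h) (K : ℝ × ℝ → ℝ) :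
    ∫ p in disk, K (h p) = ∫ p in disk, K p := by
  have d := hh.diff
  have hj := hh.2.2.1
  obtain ⟨a1, a2, a3, g', a4, a5, a6, a7⟩ := hh
  have him : h '' disk = disk := by
    apply Subset.antisymm
    · rintro _ ⟨p, hp, rfl⟩; exact a2 hp
    · intro p hp; exact ⟨g' p, a5 hp, a7 p hp⟩
  have hinj : InjOn h disk := fun p hp q hq hpq => by rw [← a6 p hp, ← a6 q hq, hpq]
  have := integral_image_eq_integral_abs_det_fderiv_smul volume disk_closed.measurableSet
    (fun p _ => (d p).hasFDerivAt.hasFDerivWithinAt) hinj K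
  rw [him] at this
  rw [this]
  refine setIntegral_congr_fun disk_closed.measurableSet fun p hp => ?_
  have hdet : (fderiv ℝ h p).det = 1 := by
    rw [← hj p hp, jac_eq (d p)]
    rw [ContinuousLinearMap.det, ← LinearMap.det_toMatrix (Module.Basis.finTwoProd ℝ), Matrix.det_fin_two]
    simp [LinearMap.toMatrix_apply, WL_apply]
    ring
  simp [hdet]

lemma J_comp {g h : ℝ × ℝ → ℝ × ℝ} (hg : IsSympO g) (hh : IsSympO h) {K L M : ℝ × ℝ → ℝ}
    (hK : IsK g K) (hL : IsK h L) (hM : IsK (g ∘ h) M) :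
    ∫ p in disk, M p = (∫ p in disk, K p) + ∫ p in disk, L p := by
  rw [setIntegral_congr_fun disk_closed.measurableSet (fun p hp => K_comp hg hh hK hL hM hp)]
  rw [integral_add ((K_cont hL).integrableOn_compact disk_compact), int_comp hh.1, add_comm]
  exact ((K_cont hK).comp hh.1.1.continuous.continuousOn hh.1.2.1).integrableOn_compact disk_compact

lemma isK_id : IsK id (fun _ => 0) := by
  refine ⟨rfl, fun p _ => ?_⟩
  have : AF id p = 0 := by ext <;> simp [AF_apply]
  rw [this]; exact hasFDerivWithinAt_const _ _ _

open Classical in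
def Jf (g : ℝ × ℝ → ℝ × ℝ) : ℝ :=
  if h : ∃ K, IsK g K then ∫ p in disk, (Classical.choose h) p else 0

lemma Jf_eq {g : ℝ × ℝ → ℝ × ℝ} (hg : IsSympO g) {K : ℝ × ℝ → ℝ} (hK : IsK g K) :
    Jf g = ∫ p in disk, K p := by
  have h : ∃ K, IsK g K := ⟨K, hK⟩
  rw [Jf, dif_pos h, J_comp hg isSympO_id hK isK_id (M := Classical.choose h)
    (Classical.choose_spec h)]
  simp

lemma Jf_comp {g h : ℝ × ℝ → ℝ × ℝ} (hg : IsSympO g) (hh : IsSympO h) :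
    Jf (g ∘ h) = Jf g + Jf h := by
  obtain ⟨K, hK⟩ := exists_K hg.1
  obtain ⟨L, hL⟩ := exists_K hh.1
  obtain ⟨M, hM⟩ := exists_K (hg.comp hh).1
  rw [Jf_eq hg hK, Jf_eq hh hL, Jf_eq (hg.comp hh) hM, J_comp hg hh hK hL hM]

lemma Jf_iter {g : ℝ × ℝ → ℝ × ℝ} (hg : IsSympO g) (n : ℕ) : Jf g^[n] = n * Jf g := by
  induction n with
  | zero => rw [Function.iterate_zero, Jf_eq isSympO_id isK_id]; simp
  | succ n ih => rw [Function.iterate_succ, Jf_comp (hg.iter n) hg, ih]; push_cast; ring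

lemma sigma_quasi {g h : ℝ × ℝ → ℝ × ℝ} (hg : IsSympO g) (hh : IsSympO h) :
    |sigmaQ (g ∘ h) - sigmaQ g - sigmaQ h| ≤ π := by
  obtain ⟨K, hK⟩ := exists_K hg.1
  obtain ⟨L, hL⟩ := exists_K hh.1
  obtain ⟨M, hM⟩ := exists_K (hg.comp hh).1
  rw [sigma_eq hg.1 hK, sigma_eq hh.1 hL, sigma_eq (hg.comp hh).1 hM,
    K_comp hg hh hK hL hM (by simp [disk])]
  have := K_osc hg.1 hK (p := h (1, 0)) (q := (1, 0)) (bdry_map hh.1 (by simp)) (by simp)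
  convert this using 2; ring

lemma sigma_lim {g : ℝ × ℝ → ℝ × ℝ} (hg : IsSympO g) :
    ∃ s, Tendsto (fun n : ℕ => sigmaQ g^[n] / (n : ℝ)) atTop (𝓝 s) := by
  have hq : ∀ m n : ℕ, |sigmaQ g^[m + n] - sigmaQ g^[m] - sigmaQ g^[n]| ≤ π := by
    intro m n
    rw [Function.iterate_add]; exact sigma_quasi (hg.iter m) (hg.iter n)
  have hsub : Subadditive (fun n : ℕ => sigmaQ g^[n] + π) := by
    intro m n
    have := (abs_le.1 (hq m n)).2
    simp only; linarith
  have hlow : ∀ n : ℕ, n * (sigmaQ g^[1] - π) ≤ sigmaQ g^[n] + π := by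
    intro n
    induction n with
    | zero =>
      have := (abs_le.1 (hq 0 0)).2
      simp only [add_zero, Nat.cast_zero, zero_mul] at *
      linarith
    | succ n ih =>
      have := (abs_le.1 (hq n 1)).1
      push_cast; linarith
  have hb : BddBelow (range fun n : ℕ => (sigmaQ g^[n] + π) / (n : ℝ)) := by
    refine ⟨-|sigmaQ g^[1] - π|, ?_⟩
    rintro _ ⟨n, rfl⟩
    rcases Nat.eq_zero_or_pos n with h | h
    · simp [h]
    · have hn : (0:ℝ) < n := by exact_mod_cast h
      simp only
      rw [le_div_iff₀ hn]
      nlinarith [hlow n, neg_abs_le (sigmaQ g^[1] - π)]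
  refine ⟨hsub.lim - 0, ?_⟩
  have h1 := (hsub.tendsto_lim hb).sub (tendsto_const_div_atTop_nhds_zero_nat π)
  refine h1.congr fun n => ?_
  ring

lemma tau_lim {g : ℝ × ℝ → ℝ × ℝ} (hg : IsSympO g) {s : ℝ}
    (hs : Tendsto (fun n : ℕ => sigmaQ g^[n] / (n : ℝ)) atTop (𝓝 s)) :
    Tendsto (fun n : ℕ => tauL g^[n] / (n : ℝ)) atTop (𝓝 (π * s - Jf g)) := by
  have hb : ∀ n : ℕ, |tauL g^[n] + n * Jf g - π * sigmaQ g^[n]| ≤ π * π := by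
    intro n
    obtain ⟨K, hK⟩ := exists_K (hg.iter n).1
    rw [← Jf_iter hg, Jf_eq (hg.iter n) hK]
    exact tau_bound (hg.iter n).1 hK
  have h0 : Tendsto (fun n : ℕ => (tauL g^[n] + n * Jf g - π * sigmaQ g^[n]) / (n : ℝ))
      atTop (𝓝 0) := by
    refine squeeze_zero_norm (fun n => ?_) (tendsto_const_div_atTop_nhds_zero_nat (π * π))
    rw [norm_div, Real.norm_eq_abs, Real.norm_natCast]
    gcongr
    exact hb n
  have h1 := (h0.add (hs.const_mul π)).sub_const (Jf g)
  rw [zero_add] at h1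
  refine h1.congr' ?_
  filter_upwards [eventually_gt_atTop 0] with n hn
  have hn : (n:ℝ) ≠ 0 := by exact_mod_cast hn.ne'
  field_simp; ring

def Tw (c : ℝ) (p : ℝ × ℝ) : ℝ × ℝ :=
  (p.1 * cos (c * (p.1 ^ 2 + p.2 ^ 2)) - p.2 * sin (c * (p.1 ^ 2 + p.2 ^ 2)),
   p.1 * sin (c * (p.1 ^ 2 + p.2 ^ 2)) + p.2 * cos (c * (p.1 ^ 2 + p.2 ^ 2)))

lemma Tw_nsq (c : ℝ) (p : ℝ × ℝ) : (Tw c p).1 ^ 2 + (Tw c p).2 ^ 2 = p.1 ^ 2 + p.2 ^ 2 := by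
  have := sin_sq_add_cos_sq (c * (p.1 ^ 2 + p.2 ^ 2))
  simp only [Tw]
  linear_combination (p.1 ^ 2 + p.2 ^ 2) * this

lemma Tw_inv (c : ℝ) (p : ℝ × ℝ) : Tw (-c) (Tw c p) = p := by
  have h := Tw_nsq c p
  have := sin_sq_add_cos_sq (c * (p.1 ^ 2 + p.2 ^ 2))
  rw [Tw, h, neg_mul, cos_neg, sin_neg]
  ext
  · simp only [Tw]; linear_combination p.1 * this
  · simp only [Tw]; linear_combination p.2 * this

lemma Tw_contDiff (c : ℝ) : ContDiff ℝ (⊤ : ℕ∞) (Tw c) := by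
  unfold Tw
  fun_prop

lemma nsq_fderiv (p : ℝ × ℝ) : HasFDerivAt (fun q : ℝ × ℝ => q.1 ^ 2 + q.2 ^ 2)
    ((2 * p.1) • ContinuousLinearMap.fst ℝ ℝ ℝ + (2 * p.2) • ContinuousLinearMap.snd ℝ ℝ ℝ) p := by
  have h1 : HasFDerivAt (fun q : ℝ × ℝ => q.1) (ContinuousLinearMap.fst ℝ ℝ ℝ) p := hasFDerivAt_fst
  have h2 : HasFDerivAt (fun q : ℝ × ℝ => q.2) (ContinuousLinearMap.snd ℝ ℝ ℝ) p := hasFDerivAt_snd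
  refine ((h1.pow 2).add (h2.pow 2)).congr_fderiv ?_
  simp

lemma Tw_fderiv (c : ℝ) (p w : ℝ × ℝ) : fderiv ℝ (Tw c) p w =
    (w.1 * cos (c * (p.1 ^ 2 + p.2 ^ 2)) - w.2 * sin (c * (p.1 ^ 2 + p.2 ^ 2))
      - (Tw c p).2 * (2 * c * (p.1 * w.1 + p.2 * w.2)),
     w.1 * sin (c * (p.1 ^ 2 + p.2 ^ 2)) + w.2 * cos (c * (p.1 ^ 2 + p.2 ^ 2))
      + (Tw c p).1 * (2 * c * (p.1 * w.1 + p.2 * w.2))) := by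
  have h1 : HasFDerivAt (fun q : ℝ × ℝ => q.1) (ContinuousLinearMap.fst ℝ ℝ ℝ) p := hasFDerivAt_fst
  have h2 : HasFDerivAt (fun q : ℝ × ℝ => q.2) (ContinuousLinearMap.snd ℝ ℝ ℝ) p := hasFDerivAt_snd
  have h3 := (nsq_fderiv p).const_mul c
  have h := ((h1.mul h3.cos).sub (h2.mul h3.sin)).prodMk ((h1.mul h3.sin).add (h2.mul h3.cos))
  have h' : HasFDerivAt (Tw c) _ p := h
  rw [h'.fderiv]
  ext <;> simp [Tw] <;> ring

lemma Tw_symp (c : ℝ) : IsSympO (Tw c) := by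
  have hm : ∀ c, MapsTo (Tw c) disk disk := fun c p hp => by
    simp only [disk, mem_ofPred_eq, Tw_nsq] at *; exact hp
  refine ⟨⟨Tw_contDiff c, hm c, fun p hp => ?_, Tw (-c), Tw_contDiff _, hm _,
    fun p _ => Tw_inv c p, fun p _ => by simpa using Tw_inv (-c) p⟩, by simp [Tw]⟩
  rw [jac_eq ((Tw_contDiff c).differentiable (by simp) p), Tw_fderiv, Tw_fderiv, WL_apply]
  have := sin_sq_add_cos_sq (c * (p.1 ^ 2 + p.2 ^ 2))
  simp only [Tw]
  linear_combination this

lemma Tw_K (c : ℝ) : IsK (Tw c) (fun p => c / 4 * (p.1 ^ 2 + p.2 ^ 2) ^ 2) := by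
  refine ⟨by simp, fun p _ => ?_⟩
  have h := (((nsq_fderiv p).pow 2).const_mul (c / 4)).hasFDerivWithinAt (s := disk)
  refine h.congr_fderiv ?_
  have key : ∀ w : ℝ × ℝ, AF (Tw c) p w = c * (p.1 ^ 2 + p.2 ^ 2) * (p.1 * w.1 + p.2 * w.2) := by
    intro w
    have := sin_sq_add_cos_sq (c * (p.1 ^ 2 + p.2 ^ 2))
    have h2 := Tw_nsq c p
    rw [AF_apply, Tw_fderiv, WL_apply, WL_apply]
    simp only
    have e : (Tw c p).1 * (w.1 * sin (c * (p.1 ^ 2 + p.2 ^ 2)) + w.2 * cos (c * (p.1 ^ 2 + p.2 ^ 2)))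
      - (Tw c p).2 * (w.1 * cos (c * (p.1 ^ 2 + p.2 ^ 2)) - w.2 * sin (c * (p.1 ^ 2 + p.2 ^ 2)))
      = p.1 * w.2 - p.2 * w.1 := by
      simp only [Tw]
      linear_combination (p.1 * w.2 - p.2 * w.1) * this
    linear_combination (1 / 2) * e + (c * (p.1 * w.1 + p.2 * w.2)) * h2
  refine ContinuousLinearMap.ext fun w => ?_
  rw [key]; simp; ring

lemma Tw_J (c : ℝ) : Jf (Tw c) = c * (π / 12) := by
  rw [Jf_eq (Tw_symp c) (Tw_K c), polar_integral (Continuous.continuousOn (by fun_prop))]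
  simp only [polar_nsq]
  have : ∀ r : ℝ, r * (c / 4 * (r ^ 2) ^ 2) = c / 4 * r ^ 5 := fun r => by ring
  simp only [this, intervalIntegral.integral_const_mul, integral_pow, intervalIntegral.integral_const]
  simp; ring

/-- for every `g ∈ G_o` the homogenizations
`τ̄(g) = lim_n τ_λ(gⁿ)/n` and `σ̄(g) = lim_n σ(gⁿ)/n` exist, and
`τ̄ - π σ̄ : G_o → ℝ` is a surjective group homomorphism. -/
theorem tau_sub_pi_sigma_is_surjective_homomorphism :
    ∃ tb sb : (ℝ × ℝ → ℝ × ℝ) → ℝ,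
      (∀ g : ℝ × ℝ → ℝ × ℝ, IsSympO g →
        Tendsto (fun n : ℕ => tauL g^[n] / (n : ℝ)) atTop (𝓝 (tb g)) ∧
        Tendsto (fun n : ℕ => sigmaQ g^[n] / (n : ℝ)) atTop (𝓝 (sb g))) ∧
      (∀ g h : ℝ × ℝ → ℝ × ℝ, IsSympO g → IsSympO h →
        tb (g ∘ h) - π * sb (g ∘ h) = (tb g - π * sb g) + (tb h - π * sb h)) ∧
      (∀ c : ℝ, ∃ g : ℝ × ℝ → ℝ × ℝ, IsSympO g ∧ tb g - π * sb g = c) := by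
  refine ⟨fun g => limUnder atTop (fun n : ℕ => tauL g^[n] / (n : ℝ)),
    fun g => limUnder atTop (fun n : ℕ => sigmaQ g^[n] / (n : ℝ)), ?_, ?_, ?_⟩
  · intro g hg
    obtain ⟨s, hs⟩ := sigma_lim hg
    exact ⟨tendsto_nhds_limUnder ⟨_, tau_lim hg hs⟩, tendsto_nhds_limUnder ⟨_, hs⟩⟩
  · intro g h hg hh
    have key : ∀ g, IsSympO g → limUnder atTop (fun n : ℕ => tauL g^[n] / (n : ℝ))
        - π * limUnder atTop (fun n : ℕ => sigmaQ g^[n] / (n : ℝ)) = - Jf g := by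
      intro g hg
      obtain ⟨s, hs⟩ := sigma_lim hg
      rw [(tau_lim hg hs).limUnder_eq, hs.limUnder_eq]; ring
    simp only
    rw [key _ (hg.comp hh), key _ hg, key _ hh, Jf_comp hg hh]; ring
  · intro c
    refine ⟨Tw (-c / (π / 12)), Tw_symp _, ?_⟩
    obtain ⟨s, hs⟩ := sigma_lim (Tw_symp (-c / (π / 12)))
    simp only
    rw [(tau_lim (Tw_symp _) hs).limUnder_eq, hs.limUnder_eq, Tw_J]
    have := pi_ne_zero
    field_simp; ring
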